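/- arXiv:2406.14036 — 4 statements merged into one kernel-verified Lean document; each statement's English description precedes it below -/
import Mathlib

section
/- Let L, m, d ≥ 1, ε ∈ (0, 1/2) and r ≥ 1. Suppose φ : ℝ^d → ℝ^r satisfies, for all i ∈ [L] and j ∈ [m], |φ(Q_i)^⊤ φ((K_C)_j) − exp(⟨Q_i, (K_C)_j⟩/√d)| ≤ ε·exp(⟨Q_i, (K_C)_j⟩/√d), where Q_i is the i-th row of Q and (K_C)_j the j-th row of K_C. Define Z := Σ_{j=1}^m φ((K_C)_j)·((V_C)_j)^⊤ ∈ ℝ^{r×d} and k := Σ_{j=1}^m φ((K_C)_j) ∈ ℝ^r, let Â := exp(QK^⊤/√d) ∈ ℝ^{L×L} (entrywise exponential), and define T ∈ ℝ^{L×d} row-wise by T_{i,*} := (Â_{i,*}V + φ(Q_i)^⊤ Z) / (⟨Â_{i,*}, 1_L⟩ + φ(Q_i)^⊤ k). Then every denominator ⟨Â_{i,*}, 1_L⟩ + φ(Q_i)^⊤ k is strictly positive, and ‖T − PrefixAttn(X,P)‖_∞ ≤ 4ε·max(‖V‖_∞, ‖V_C‖_∞), where ‖M‖_∞ denotes the maximum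 absolute value of the entries of M. -/
/-!
Row `i` and column `c` fixed, prefix attention is a weighted mean `N / D` of the values, with
positive weights `a` on the input and `b` on the prefix, and `T` is the same quotient `N' / D'` with
`b` replaced by the weights `φ(Q_i)⊤φ((K_C)_j)`, which are off by a relative error at most `ε`.
If `M` bounds the values and `B = ∑ b`, then `|N' - N| ≤ ε B M`, `|D' - D| ≤ ε B` and `|N| ≤ M D`,
while `D' ≥ (1 - ε) B ≥ B / 2`. Hence
`N' / D' - N / D = ((N' - N) + (N / D) (D - D')) / D'` is at most `2 ε B M / (B / 2) = 4 ε M`.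
This estimate is `abs_perturbed_mean_sub_le`; the rest is rewriting sums into this form.
-/

/-- Matrix product of rectangular matrices given as functions. -/
noncomputable def matMul {p q s : ℕ} (A : Fin p → Fin q → ℝ) (B : Fin q → Fin s → ℝ)
    (i : Fin p) (j : Fin s) : ℝ :=
  ∑ l, A i l * B l j

/-- Prefix attention: with `S = [P; X]`, `Q = X·W_Q`, `K_P = S·W_K`, `V_P = S·W_V`, the
`(i,c)` entry of `PrefixAttn(X,P)` is
`(Σ_j exp(⟨Q_i, (K_P)_j⟩/√d)·(V_P)_{j,c}) / (Σ_j exp(⟨Q_i, (K_P)_j⟩/√d))`. -/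
noncomputable def prefixAttn {L m d : ℕ} (X : Fin L → Fin d → ℝ) (P : Fin m → Fin d → ℝ)
    (WQ WK WV : Fin d → Fin d → ℝ) (i : Fin L) (c : Fin d) : ℝ :=
  let S : Fin (m + L) → Fin d → ℝ :=
    fun j => Fin.addCases (motive := fun _ => Fin d → ℝ) (fun j1 => P j1) (fun j2 => X j2) j
  (∑ j, Real.exp ((∑ l, matMul X WQ i l * matMul S WK j l) / Real.sqrt d) * matMul S WV j c)
    / ∑ j, Real.exp ((∑ l, matMul X WQ i l * matMul S WK j l) / Real.sqrt d)

lemma sum_perturbed_weights_sub_le {m : ℕ} {b c : Fin m → ℝ} {ε : ℝ}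
    (h : ∀ j, |c j - b j| ≤ ε * b j) (w : Fin m → ℝ) {M : ℝ}
    (hw : ∀ j, |w j| ≤ M) :
    |∑ j, c j * w j - ∑ j, b j * w j| ≤ ε * (∑ j, b j) * M := by
  rw [← Finset.sum_sub_distrib, mul_assoc, Finset.sum_mul, Finset.mul_sum]
  refine (Finset.abs_sum_le_sum_abs _ _).trans (Finset.sum_le_sum fun j _ => ?_)
  rw [← sub_mul, abs_mul, ← mul_assoc]
  have := (abs_nonneg _).trans (h j)
  exact mul_le_mul (h j) (hw j) (abs_nonneg _) this

lemma abs_sum_weights_mul_le {n : ℕ} {a v : Fin n → ℝ} {M : ℝ} (ha : ∀ i, 0 ≤ a i)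
    (hv : ∀ i, |v i| ≤ M) : |∑ i, a i * v i| ≤ (∑ i, a i) * M := by
  rw [Finset.sum_mul]
  refine (Finset.abs_sum_le_sum_abs _ _).trans (Finset.sum_le_sum fun i _ => ?_)
  rw [abs_mul, abs_of_nonneg (ha i)]
  exact mul_le_mul_of_nonneg_left (hv i) (ha i)

/-- Since `c ≥ (1 - ε) b ≥ b / 2`, the perturbed weights keep at least half of the mass. -/
lemma half_sum_le_sum_perturbed {m : ℕ} {b c : Fin m → ℝ} {ε : ℝ} (hε : ε < 1 / 2)
    (hb : ∀ j, 0 < b j) (h : ∀ j, |c j - b j| ≤ ε * b j) :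
    (∑ j, b j) / 2 ≤ ∑ j, c j := by
  rw [Finset.sum_div]
  refine Finset.sum_le_sum fun j _ => ?_
  have := (abs_le.mp (h j)).1
  nlinarith [hb j]

/-- A weighted mean of values bounded by `M` moves by at most `4 ε M` when some of its weights
change by a relative error at most `ε < 1 / 2`. -/
lemma abs_perturbed_mean_sub_le {n m : ℕ} (hm : 1 ≤ m) {a v : Fin n → ℝ} {b c w : Fin m → ℝ}
    {ε M : ℝ} (hε : 0 < ε) (hε' : ε < 1 / 2) (ha : ∀ i, 0 < a i) (hb : ∀ j, 0 < b j)
    (h : ∀ j, |c j - b j| ≤ ε * b j) (hM : 0 ≤ M) (hv : ∀ i, |v i| ≤ M) (hw : ∀ j, |w j| ≤ M) :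
    |(∑ i, a i * v i + ∑ j, c j * w j) / (∑ i, a i + ∑ j, c j)
      - (∑ j, b j * w j + ∑ i, a i * v i) / (∑ j, b j + ∑ i, a i)| ≤ 4 * ε * M := by
  have : Nonempty (Fin m) := ⟨⟨0, hm⟩⟩
  have hA : 0 ≤ ∑ i, a i := Finset.sum_nonneg fun i _ => (ha i).le
  have hB : 0 < ∑ j, b j := Finset.sum_pos (fun j _ => hb j) Finset.univ_nonempty
  have hC := half_sum_le_sum_perturbed hε' hb h
  have h1 := sum_perturbed_weights_sub_le h w hw
  have h2 := sum_perturbed_weights_sub_le h (fun _ => 1) (M := 1) (by simp)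
  have h3 := abs_sum_weights_mul_le (fun i => (ha i).le) hv
  have h4 := abs_sum_weights_mul_le (fun i => (hb i).le) hw
  simp only [mul_one] at h2
  generalize ∑ i, a i * v i = AV at *
  generalize ∑ i, c i * w i = CW at *
  generalize ∑ i, b i * w i = BW at *
  generalize ∑ i, a i = A at *
  generalize ∑ i, b i = B at *
  generalize ∑ i, c i = C at *
  have hD : 0 < B + A := by linarith
  have hD' : 0 < A + C := by linarith
  have hmean : |(BW + AV) / (B + A)| ≤ M := by
    rw [abs_div, abs_of_pos hD, div_le_iff₀ hD]
    refine (abs_add_le _ _).trans ?_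
    linarith
  have key : (AV + CW) / (A + C) - (BW + AV) / (B + A)
      = ((CW - BW) - (BW + AV) / (B + A) * (C - B)) / (A + C) := by
    field_simp
    ring
  rw [key, abs_div, abs_of_pos hD', div_le_iff₀ hD']
  have h5 : |(BW + AV) / (B + A) * (C - B)| ≤ M * (ε * B) := by
    rw [abs_mul]
    exact mul_le_mul hmean h2 (abs_nonneg _) hM
  have h6 : ε * M * (B / 2) ≤ ε * M * (A + C) :=
    mul_le_mul_of_nonneg_left (by linarith) (by positivity)
  refine (abs_sub _ _).trans ?_
  linarith

lemma abs_entry_le_iSup {p q : ℕ} (A : Fin p → Fin q → ℝ) (i : Fin p) (j : Fin q) :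
    |A i j| ≤ ⨆ i, ⨆ j, |A i j| :=
  (le_ciSup (f := fun j => |A i j|) (Set.finite_range _).bddAbove j).trans
    (le_ciSup (f := fun i => ⨆ j, |A i j|) (Set.finite_range _).bddAbove i)

lemma prefixAttn_eq {L m d : ℕ} (X : Fin L → Fin d → ℝ) (P : Fin m → Fin d → ℝ)
    (WQ WK WV : Fin d → Fin d → ℝ) (i : Fin L) (c : Fin d) :
    prefixAttn X P WQ WK WV i c =
      (∑ j, Real.exp ((∑ l, matMul X WQ i l * matMul P WK j l) / Real.sqrt d) * matMul P WV j c
        + ∑ j, Real.exp ((∑ l, matMul X WQ i l * matMul X WK j l) / Real.sqrt d)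
          * matMul X WV j c)
      / (∑ j, Real.exp ((∑ l, matMul X WQ i l * matMul P WK j l) / Real.sqrt d)
        + ∑ j, Real.exp ((∑ l, matMul X WQ i l * matMul X WK j l) / Real.sqrt d)) := by
  simp [prefixAttn, Fin.sum_univ_add, matMul]

/-- NTK-Attention approximation guarantee. With `Q = X·W_Q`,
`K = X·W_K`, `V = X·W_V`, `K_C = P·W_K`, `V_C = P·W_V`, suppose
`φ` satisfies `|φ(Q_i)⊤φ((K_C)_j) − exp(⟨Q_i,(K_C)_j⟩/√d)| ≤ ε·exp(⟨Q_i,(K_C)_j⟩/√d)`.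
With `Z = Σ_j φ((K_C)_j)·((V_C)_j)⊤`, `k = Σ_j φ((K_C)_j)` and `Â = exp(QK⊤/√d)`,
the matrix `T` with rows `T_i = (Â_i V + φ(Q_i)⊤Z) / (⟨Â_i,1_L⟩ + φ(Q_i)⊤k)` has
strictly positive denominators and satisfies
`‖T − PrefixAttn(X,P)‖_∞ ≤ 4ε·max(‖V‖_∞, ‖V_C‖_∞)`. -/
theorem stmt_1 (L m d r : ℕ) (hL : 1 ≤ L) (hm : 1 ≤ m) (hd : 1 ≤ d) (hr : 1 ≤ r)
    (ε : ℝ) (hε : 0 < ε) (hε' : ε < 1 / 2)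
    (X : Fin L → Fin d → ℝ) (P : Fin m → Fin d → ℝ) (WQ WK WV : Fin d → Fin d → ℝ)
    (φ : (Fin d → ℝ) → (Fin r → ℝ))
    (hφ : ∀ (i : Fin L) (j : Fin m),
      |(∑ t, φ (fun l => matMul X WQ i l) t * φ (fun l => matMul P WK j l) t)
          - Real.exp ((∑ l, matMul X WQ i l * matMul P WK j l) / Real.sqrt d)|
        ≤ ε * Real.exp ((∑ l, matMul X WQ i l * matMul P WK j l) / Real.sqrt d)) :
    (∀ i : Fin L,
      0 < (∑ i', Real.exp ((∑ l, matMul X WQ i l * matMul X WK i' l) / Real.sqrt d))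
          + ∑ t, φ (fun l => matMul X WQ i l) t * ∑ j, φ (fun l => matMul P WK j l) t) ∧
    (∀ (i : Fin L) (c : Fin d),
      |((∑ i', Real.exp ((∑ l, matMul X WQ i l * matMul X WK i' l) / Real.sqrt d)
            * matMul X WV i' c)
          + ∑ t, φ (fun l => matMul X WQ i l) t
            * ∑ j, φ (fun l => matMul P WK j l) t * matMul P WV j c)
        / ((∑ i', Real.exp ((∑ l, matMul X WQ i l * matMul X WK i' l) / Real.sqrt d))
          + ∑ t, φ (fun l => matMul X WQ i l) t * ∑ j, φ (fun l => matMul P WK j l) t)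
        - prefixAttn X P WQ WK WV i c|
      ≤ 4 * ε * max (⨆ p, ⨆ q, |matMul X WV p q|) (⨆ p, ⨆ q, |matMul P WV p q|)) := by
  -- `φ(Q_i)⊤ ∑ j, φ((K_C)_j) y_j = ∑ j, (φ(Q_i)⊤φ((K_C)_j)) y_j`
  have hswap : ∀ (u : Fin r → ℝ) (f : Fin m → Fin r → ℝ) (y : Fin m → ℝ),
      ∑ t, u t * ∑ j, f j t * y j = ∑ j, (∑ t, u t * f j t) * y j := by
    intro u f y
    simp only [Finset.mul_sum, Finset.sum_mul, mul_assoc]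
    exact Finset.sum_comm
  have hswap1 : ∀ (u : Fin r → ℝ) (f : Fin m → Fin r → ℝ),
      ∑ t, u t * ∑ j, f j t = ∑ j, ∑ t, u t * f j t := by
    intro u f
    simpa using hswap u f (fun _ => 1)
  refine ⟨fun i => ?_, fun i c => ?_⟩
  · have : Nonempty (Fin L) := ⟨i⟩
    rw [hswap1 (φ fun l => matMul X WQ i l) (fun j => φ fun l => matMul P WK j l)]
    refine add_pos_of_pos_of_nonneg
      (Finset.sum_pos (fun _ _ => Real.exp_pos _) Finset.univ_nonempty) ?_
    refine le_trans ?_ (half_sum_le_sum_perturbed hε' (fun _ => Real.exp_pos _) (hφ i))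
    positivity
  · rw [prefixAttn_eq, hswap1 (φ fun l => matMul X WQ i l) (fun j => φ fun l => matMul P WK j l),
      hswap (φ fun l => matMul X WQ i l) (fun j => φ fun l => matMul P WK j l)
        (fun j => matMul P WV j c)]
    have hv := fun j => (abs_entry_le_iSup (matMul X WV) j c).trans
      (le_max_left _ (⨆ p, ⨆ q, |matMul P WV p q|))
    have hw := fun j => (abs_entry_le_iSup (matMul P WV) j c).trans
      (le_max_right (⨆ p, ⨆ q, |matMul X WV p q|) _)
    exact abs_perturbed_mean_sub_le hm hε hε' (fun _ => Real.exp_pos _) (fun _ => Real.exp_pos _)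
      (hφ i) ((abs_nonneg _).trans (hv i)) hv hw
end

section
/- Let n, d, m ≥ 1, B ≥ 1 and R ∈ (0, 0.01). Let x_1, …, x_n ∈ ℝ^d with ‖x_i‖₂ ≤ 1 for all i, let a ∈ {−1,+1}^m, and let W, W̃ ∈ ℝ^{d×m} with columns w_r, w̃_r satisfy: ‖w̃_r − w_r‖₂ ≤ R for all r ∈ [m]; |⟨w_r, x_i⟩| ≤ B and |⟨w̃_r, x_i⟩| ≤ B for all r ∈ [m], i ∈ [n]; and |W_{k,r}| ≤ B and |W̃_{k,r}| ≤ B for all k ∈ [d], r ∈ [m]. Then for all i, j ∈ [n] and k₁, k₂ ∈ [d], |[H_{k₁,k₂}]_{i,j}(W) − [H_{k₁,k₂}]_{i,j}(W̃)| ≤ 8R·exp(22B). -/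
/-!
Write `S = softS W x`, `u_r = ⟨v_{k,r}, S⟩ = β_r - ⟨β, S⟩` and `g_r = u_r S_r`, so that an entry of
`H(W)` is `m (x_i ⬝ x_j) ∑ r, g_r g'_r`.

If two logit vectors differ by at most `c` in each coordinate, then their softmax vectors differ by
a factor of at most `exp (2c)` in each coordinate (`softmax_le`). Comparing with the zero logits
gives `S_r ≤ exp (2B) / m`. By Cauchy–Schwarz the logits of `W` and `W̃` differ by at most `R`, and
`exp (2R) ≤ 1 + 3R`, so `|S_r - S̃_r| ≤ 3R S_r`. Since `∑ S = 1` this gives `|u_r| ≤ 2B`,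
`|u_r - ũ_r| ≤ 2R + 3RB ≤ 5RB`, hence `|g_r| ≤ 2B exp (2B) / m` and
`|g_r - g̃_r| ≤ 11RB exp (2B) / m`. Summing the differences of the products `g_r g'_r`, each entry
of `H` moves by at most `44 R B² exp (4B)`, which is less than `8 R exp (22B)`.
-/

/-- The softmax vector of `x` with respect to the columns of `W`:
`S(W,x)_r = exp⟨w_r,x⟩ / Σ_ρ exp⟨w_ρ,x⟩`. -/
noncomputable def softS {d m : ℕ} (W : Fin d → Fin m → ℝ) (x : Fin d → ℝ) (r : Fin m) : ℝ :=
  Real.exp (∑ k, W k r * x k) / ∑ ρ, Real.exp (∑ k, W k ρ * x k)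

/-- `v_{k,r}(W)_ρ = β_k(W)_r − β_k(W)_ρ` where `β_k(W)_ρ = W_{k,ρ}·a_ρ`. -/
noncomputable def vKR {d m : ℕ} (W : Fin d → Fin m → ℝ) (a : Fin m → ℝ)
    (k : Fin d) (r ρ : Fin m) : ℝ :=
  W k r * a r - W k ρ * a ρ

/-- The model `F(W,x,a)_k = m·⟨β_k(W), S(W,x)⟩`. -/
noncomputable def modelF {d m : ℕ} (W : Fin d → Fin m → ℝ) (x : Fin d → ℝ)
    (a : Fin m → ℝ) (k : Fin d) : ℝ :=
  (m : ℝ) * ∑ r, (W k r * a r) * softS W x r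

/-- The NTK matrix: for `p = (k₁, i)` and `q = (k₂, j)`,
`H(W)_{p,q} = m·(x_i⊤x_j)·Σ_r ⟨v_{k₁,r},S_i⟩·S_{i,r}·⟨v_{k₂,r},S_j⟩·S_{j,r}`. -/
noncomputable def ntkH {n d m : ℕ} (W : Fin d → Fin m → ℝ) (a : Fin m → ℝ)
    (x : Fin n → Fin d → ℝ) (p q : Fin d × Fin n) : ℝ :=
  (m : ℝ) * (∑ l, x p.2 l * x q.2 l) *
    ∑ r, (∑ ρ, vKR W a p.1 r ρ * softS W (x p.2) ρ) * softS W (x p.2) r *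
      ((∑ ρ, vKR W a q.1 r ρ * softS W (x q.2) ρ) * softS W (x q.2) r)

/-- Perturbing the logits by at most `c` multiplies each softmax weight by at most `exp (2c)`. -/
lemma softmax_le {m : ℕ} (hm : 1 ≤ m) (y z : Fin m → ℝ) (c : ℝ) (h : ∀ r, |y r - z r| ≤ c)
    (r : Fin m) :
    Real.exp (y r) / ∑ ρ, Real.exp (y ρ)
      ≤ Real.exp (2 * c) * (Real.exp (z r) / ∑ ρ, Real.exp (z ρ)) := by
  have : Nonempty (Fin m) := ⟨⟨0, hm⟩⟩
  have hy : 0 < ∑ ρ, Real.exp (y ρ) :=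
    Finset.sum_pos (fun _ _ => Real.exp_pos _) Finset.univ_nonempty
  have hz : 0 < ∑ ρ, Real.exp (z ρ) :=
    Finset.sum_pos (fun _ _ => Real.exp_pos _) Finset.univ_nonempty
  have h1 : Real.exp (y r) ≤ Real.exp c * Real.exp (z r) := by
    rw [← Real.exp_add]
    exact Real.exp_le_exp.2 (by linarith [(abs_le.1 (h r)).2])
  have h2 : ∑ ρ, Real.exp (z ρ) ≤ Real.exp c * ∑ ρ, Real.exp (y ρ) := by
    rw [Finset.mul_sum]
    refine Finset.sum_le_sum fun ρ _ => ?_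
    rw [← Real.exp_add]
    exact Real.exp_le_exp.2 (by linarith [(abs_le.1 (h ρ)).1])
  rw [← mul_div_assoc, div_le_div_iff₀ hy hz]
  calc Real.exp (y r) * ∑ ρ, Real.exp (z ρ)
      ≤ (Real.exp c * Real.exp (z r)) * (Real.exp c * ∑ ρ, Real.exp (y ρ)) := by
        gcongr
    _ = Real.exp (2 * c) * Real.exp (z r) * ∑ ρ, Real.exp (y ρ) := by
        rw [two_mul, Real.exp_add]; ring

lemma softS_nonneg {d m : ℕ} (W : Fin d → Fin m → ℝ) (x : Fin d → ℝ) (r : Fin m) :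
    0 ≤ softS W x r := by
  unfold softS; positivity

lemma softS_sum {d m : ℕ} (hm : 1 ≤ m) (W : Fin d → Fin m → ℝ) (x : Fin d → ℝ) :
    ∑ r, softS W x r = 1 := by
  have : Nonempty (Fin m) := ⟨⟨0, hm⟩⟩
  unfold softS
  rw [← Finset.sum_div]
  exact div_self (Finset.sum_pos (fun _ _ => Real.exp_pos _) Finset.univ_nonempty).ne'

lemma softS_le {d m : ℕ} (hm : 1 ≤ m) (W : Fin d → Fin m → ℝ) (x : Fin d → ℝ) (B : ℝ)
    (h : ∀ r, |∑ k, W k r * x k| ≤ B) (r : Fin m) :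
    softS W x r ≤ Real.exp (2 * B) / m := by
  have := softmax_le hm (fun r => ∑ k, W k r * x k) (fun _ => 0) B (by simpa using h) r
  simpa [softS, div_eq_mul_inv] using this

lemma softS_sub {d m : ℕ} (hm : 1 ≤ m) (W Wt : Fin d → Fin m → ℝ) (x : Fin d → ℝ) (R : ℝ)
    (hR : 0 < R) (hR' : R < 0.01) (h : ∀ r, |∑ k, W k r * x k - ∑ k, Wt k r * x k| ≤ R)
    (r : Fin m) : |softS W x r - softS Wt x r| ≤ 3 * R * softS W x r := by
  have h1 : softS W x r ≤ Real.exp (2 * R) * softS Wt x r :=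
    softmax_le hm (fun r => ∑ k, W k r * x k) (fun r => ∑ k, Wt k r * x k) R h r
  have h2 : softS Wt x r ≤ Real.exp (2 * R) * softS W x r :=
    softmax_le hm (fun r => ∑ k, Wt k r * x k) (fun r => ∑ k, W k r * x k) R
      (fun r => by rw [abs_sub_comm]; exact h r) r
  have hS := softS_nonneg W x r
  have hT := softS_nonneg Wt x r
  norm_num at hR'
  -- `exp (2R) ≤ 1 / (1 - 2R)`
  have e0 : Real.exp (2 * R) * (1 - 2 * R) ≤ 1 := by
    have := Real.add_one_le_exp (-(2 * R))
    calc Real.exp (2 * R) * (1 - 2 * R) ≤ Real.exp (2 * R) * Real.exp (-(2 * R)) := by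
          gcongr; linarith
      _ = 1 := by rw [← Real.exp_add]; simp
  have e1 : Real.exp (2 * R) ≤ 1 + 3 * R := by
    by_contra! hc
    nlinarith
  have h3 : (1 - 2 * R) * softS W x r ≤ softS Wt x r := by
    calc (1 - 2 * R) * softS W x r ≤ (1 - 2 * R) * (Real.exp (2 * R) * softS Wt x r) :=
          mul_le_mul_of_nonneg_left h1 (by linarith)
      _ = (Real.exp (2 * R) * (1 - 2 * R)) * softS Wt x r := by ring
      _ ≤ 1 * softS Wt x r := mul_le_mul_of_nonneg_right e0 hT
      _ = _ := one_mul _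
  have h4 := mul_le_mul_of_nonneg_right e1 hS
  rw [abs_le]
  constructor <;> nlinarith

/-- The logits move by at most `R`, by Cauchy–Schwarz. -/
lemma logit_sub {d : ℕ} (w wt x : Fin d → ℝ) (R : ℝ) (hx : Real.sqrt (∑ l, (x l) ^ 2) ≤ 1)
    (h : Real.sqrt (∑ k, (wt k - w k) ^ 2) ≤ R) :
    |∑ k, w k * x k - ∑ k, wt k * x k| ≤ R := by
  have e : ∑ k, w k * x k - ∑ k, wt k * x k = - ∑ k, (wt k - w k) * x k := by
    rw [← Finset.sum_sub_distrib, ← Finset.sum_neg_distrib]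
    exact Finset.sum_congr rfl fun _ _ => by ring
  have hR : 0 ≤ R := (Real.sqrt_nonneg _).trans h
  rw [e, abs_neg]
  refine Real.abs_le_sqrt (Finset.sum_mul_sq_le_sq_mul_sq _ _ _) |>.trans ?_
  rw [Real.sqrt_mul (Finset.sum_nonneg fun _ _ => sq_nonneg _)]
  calc _ ≤ R * 1 := mul_le_mul h hx (Real.sqrt_nonneg _) hR
    _ = R := mul_one R

/-- The factor `u_r = ⟨v_{k,r}, S⟩` equals `β_r - ⟨β, S⟩`. -/
lemma vKR_sum {d m : ℕ} (hm : 1 ≤ m) (W : Fin d → Fin m → ℝ) (a : Fin m → ℝ) (x : Fin d → ℝ)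
    (k : Fin d) (r : Fin m) :
    ∑ ρ, vKR W a k r ρ * softS W x ρ = W k r * a r - ∑ ρ, W k ρ * a ρ * softS W x ρ := by
  simp only [vKR, sub_mul, Finset.sum_sub_distrib, ← Finset.mul_sum, softS_sum hm, mul_one]

/-- An average against the softmax weights is bounded by a pointwise bound. -/
lemma abs_avg_le {d m : ℕ} (hm : 1 ≤ m) (W : Fin d → Fin m → ℝ) (x : Fin d → ℝ)
    (f : Fin m → ℝ) (C : ℝ) (hf : ∀ r, |f r| ≤ C * softS W x r) : |∑ r, f r| ≤ C := by
  calc |∑ r, f r| ≤ ∑ r, |f r| := Finset.abs_sum_le_sum_abs _ _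
    _ ≤ ∑ r, C * softS W x r := Finset.sum_le_sum fun r _ => hf r
    _ = C := by rw [← Finset.mul_sum, softS_sum hm, mul_one]

lemma abs_u_le {d m : ℕ} (hm : 1 ≤ m) (B : ℝ) (a : Fin m → ℝ) (ha : ∀ r, |a r| = 1)
    (W : Fin d → Fin m → ℝ) (hWb : ∀ k r, |W k r| ≤ B) (x : Fin d → ℝ) (k : Fin d) (r : Fin m) :
    |∑ ρ, vKR W a k r ρ * softS W x ρ| ≤ 2 * B := by
  rw [vKR_sum hm]
  have h1 : |W k r * a r| ≤ B := by rw [abs_mul, ha, mul_one]; exact hWb k r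
  have h2 : |∑ ρ, W k ρ * a ρ * softS W x ρ| ≤ B := abs_avg_le hm W x _ B fun ρ => by
    rw [abs_mul, abs_mul, ha, mul_one, abs_of_nonneg (softS_nonneg W x ρ)]
    exact mul_le_mul_of_nonneg_right (hWb k ρ) (softS_nonneg W x ρ)
  linarith [abs_sub (W k r * a r) (∑ ρ, W k ρ * a ρ * softS W x ρ)]

/-- The bound `|g_r - g̃_r| ≤ 11 R B S_r` for `g_r = u_r S_r`. -/
lemma g_sub {d m : ℕ} (hm : 1 ≤ m) (B R : ℝ) (hB : 1 ≤ B) (hR : 0 < R)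
    (a : Fin m → ℝ) (ha : ∀ r, |a r| = 1) (W Wt : Fin d → Fin m → ℝ)
    (hd : ∀ k r, |W k r - Wt k r| ≤ R) (hWtb : ∀ k r, |Wt k r| ≤ B) (x : Fin d → ℝ)
    (hS : ∀ r, |softS W x r - softS Wt x r| ≤ 3 * R * softS W x r) (k : Fin d) (r : Fin m) :
    |(∑ ρ, vKR W a k r ρ * softS W x ρ) * softS W x r
      - (∑ ρ, vKR Wt a k r ρ * softS Wt x ρ) * softS Wt x r| ≤ 11 * R * B * softS W x r := by
  have hut := abs_u_le hm B a ha Wt hWtb x k r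
  have hu : |(∑ ρ, vKR W a k r ρ * softS W x ρ) - ∑ ρ, vKR Wt a k r ρ * softS Wt x ρ|
      ≤ 5 * R * B := by
    rw [vKR_sum hm, vKR_sum hm]
    have e : (W k r * a r - ∑ ρ, W k ρ * a ρ * softS W x ρ)
        - (Wt k r * a r - ∑ ρ, Wt k ρ * a ρ * softS Wt x ρ)
        = (W k r - Wt k r) * a r - ∑ ρ, ((W k ρ - Wt k ρ) * a ρ * softS W x ρ
            + Wt k ρ * a ρ * (softS W x ρ - softS Wt x ρ)) := by
      have : ∑ ρ, ((W k ρ - Wt k ρ) * a ρ * softS W x ρ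
            + Wt k ρ * a ρ * (softS W x ρ - softS Wt x ρ))
          = ∑ ρ, W k ρ * a ρ * softS W x ρ - ∑ ρ, Wt k ρ * a ρ * softS Wt x ρ := by
        rw [← Finset.sum_sub_distrib]
        exact Finset.sum_congr rfl fun _ _ => by ring
      rw [this]; ring
    rw [e]
    have h1 : |(W k r - Wt k r) * a r| ≤ R := by rw [abs_mul, ha, mul_one]; exact hd k r
    have h2 : |∑ ρ, ((W k ρ - Wt k ρ) * a ρ * softS W x ρ
            + Wt k ρ * a ρ * (softS W x ρ - softS Wt x ρ))| ≤ R + B * (3 * R) :=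
      abs_avg_le hm W x _ _ fun ρ => by
        refine (abs_add_le _ _).trans ?_
        rw [abs_mul, abs_mul, abs_mul, abs_mul, ha, mul_one, mul_one,
          abs_of_nonneg (softS_nonneg W x ρ), add_mul, mul_assoc B]
        exact add_le_add (mul_le_mul_of_nonneg_right (hd k ρ) (softS_nonneg W x ρ))
          (mul_le_mul (hWtb k ρ) (hS ρ) (abs_nonneg _) (by linarith))
    refine (abs_sub _ _).trans ?_
    nlinarith
  have h0 := softS_nonneg W x r
  generalize (∑ ρ, vKR W a k r ρ * softS W x ρ) = u at *
  generalize (∑ ρ, vKR Wt a k r ρ * softS Wt x ρ) = ut at *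
  have e : u * softS W x r - ut * softS Wt x r
      = (u - ut) * softS W x r + ut * (softS W x r - softS Wt x r) := by ring
  rw [e]
  refine (abs_add_le _ _).trans ?_
  rw [abs_mul, abs_mul, abs_of_nonneg h0]
  have h1 := mul_le_mul_of_nonneg_right hu h0
  have h2 := mul_le_mul hut (hS r) (abs_nonneg _) (by linarith)
  linarith

/-- Entrywise kernel perturbation: if the columns of `W, W̃` are
`R`-close, all column inner products with the data are bounded by `B`, and all entries of
`W, W̃` are bounded by `B`, then each entry of `H(W) − H(W̃)` is at most `8R·exp(22B)`. -/
theorem stmt_3 (n d m : ℕ) (hn : 1 ≤ n) (hd : 1 ≤ d) (hm : 1 ≤ m)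
    (B R : ℝ) (hB : 1 ≤ B) (hR : 0 < R) (hR' : R < 0.01)
    (x : Fin n → Fin d → ℝ) (hx : ∀ i, Real.sqrt (∑ l, (x i l) ^ 2) ≤ 1)
    (a : Fin m → ℝ) (ha : ∀ r, a r = 1 ∨ a r = -1)
    (W Wt : Fin d → Fin m → ℝ)
    (hWWt : ∀ r, Real.sqrt (∑ k, (Wt k r - W k r) ^ 2) ≤ R)
    (hWx : ∀ r i, |∑ k, W k r * x i k| ≤ B)
    (hWtx : ∀ r i, |∑ k, Wt k r * x i k| ≤ B)
    (hWb : ∀ k r, |W k r| ≤ B) (hWtb : ∀ k r, |Wt k r| ≤ B) :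
    ∀ (i j : Fin n) (k₁ k₂ : Fin d),
      |ntkH W a x (k₁, i) (k₂, j) - ntkH Wt a x (k₁, i) (k₂, j)|
        ≤ 8 * R * Real.exp (22 * B) := by
  intro i j k₁ k₂
  have ha' : ∀ r, |a r| = 1 := fun r => by rcases ha r with h | h <;> simp [h]
  have hm0 : (0 : ℝ) < m := by exact_mod_cast hm
  have hd' : ∀ k r, |W k r - Wt k r| ≤ R := fun k r => by
    rw [abs_sub_comm]
    refine (Real.abs_le_sqrt ?_).trans (hWWt r)
    exact Finset.single_le_sum (f := fun k => (Wt k r - W k r) ^ 2)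
      (fun _ _ => sq_nonneg _) (Finset.mem_univ k)
  have hS : ∀ i r, |softS W (x i) r - softS Wt (x i) r| ≤ 3 * R * softS W (x i) r := fun i r =>
    softS_sub hm W Wt (x i) R hR hR'
      (fun r => logit_sub (fun k => W k r) (fun k => Wt k r) (x i) R (hx i) (hWWt r)) r
  have hxx : |∑ l, x i l * x j l| ≤ 1 := by
    simpa using logit_sub (x i) (fun _ => 0) (x j) 1 (hx j) (by simpa using hx i)
  set E := Real.exp (2 * B) with hE
  have hE0 : 0 < E := Real.exp_pos _
  have hg : ∀ k i r, |(∑ ρ, vKR W a k r ρ * softS W (x i) ρ) * softS W (x i) r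
      - (∑ ρ, vKR Wt a k r ρ * softS Wt (x i) ρ) * softS Wt (x i) r|
        ≤ 11 * R * B * (E / m) := fun k i r =>
    (g_sub hm B R hB hR a ha' W Wt hd' hWtb (x i) (hS i) k r).trans
      (mul_le_mul_of_nonneg_left (softS_le hm W (x i) B (fun r => hWx r i) r) (by positivity))
  have hb : ∀ k i r, |(∑ ρ, vKR W a k r ρ * softS W (x i) ρ) * softS W (x i) r|
      ≤ 2 * B * (E / m) := fun k i r => by
    rw [abs_mul, abs_of_nonneg (softS_nonneg W (x i) r)]
    exact mul_le_mul (abs_u_le hm B a ha' W hWb (x i) k r)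
      (softS_le hm W (x i) B (fun r => hWx r i) r) (softS_nonneg _ _ _) (by linarith)
  have hbt : ∀ k i r, |(∑ ρ, vKR Wt a k r ρ * softS Wt (x i) ρ) * softS Wt (x i) r|
      ≤ 2 * B * (E / m) := fun k i r => by
    rw [abs_mul, abs_of_nonneg (softS_nonneg Wt (x i) r)]
    exact mul_le_mul (abs_u_le hm B a ha' Wt hWtb (x i) k r)
      (softS_le hm Wt (x i) B (fun r => hWtx r i) r) (softS_nonneg _ _ _) (by linarith)
  simp only [ntkH]
  rw [← mul_sub, ← Finset.sum_sub_distrib, abs_mul, abs_mul, abs_of_pos hm0]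
  have hsum : |∑ r, ((∑ ρ, vKR W a k₁ r ρ * softS W (x i) ρ) * softS W (x i) r *
        ((∑ ρ, vKR W a k₂ r ρ * softS W (x j) ρ) * softS W (x j) r) -
      (∑ ρ, vKR Wt a k₁ r ρ * softS Wt (x i) ρ) * softS Wt (x i) r *
        ((∑ ρ, vKR Wt a k₂ r ρ * softS Wt (x j) ρ) * softS Wt (x j) r))|
      ≤ m * (44 * R * B ^ 2 * (E / m) ^ 2) := by
    refine (Finset.abs_sum_le_sum_abs _ _).trans ?_
    refine (Finset.sum_le_card_nsmul _ _ (44 * R * B ^ 2 * (E / m) ^ 2) fun r _ => ?_).trans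
      (by simp)
    have h1 := hg k₁ i r
    have h2 := hg k₂ j r
    have h3 := hb k₂ j r
    have h4 := hbt k₁ i r
    generalize (∑ ρ, vKR W a k₁ r ρ * softS W (x i) ρ) * softS W (x i) r = g at *
    generalize (∑ ρ, vKR W a k₂ r ρ * softS W (x j) ρ) * softS W (x j) r = g' at *
    generalize (∑ ρ, vKR Wt a k₁ r ρ * softS Wt (x i) ρ) * softS Wt (x i) r = gt at *
    generalize (∑ ρ, vKR Wt a k₂ r ρ * softS Wt (x j) ρ) * softS Wt (x j) r = gt' at *
    have e : g * g' - gt * gt' = (g - gt) * g' + gt * (g' - gt') := by ring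
    rw [e]
    refine (abs_add_le _ _).trans ?_
    rw [abs_mul, abs_mul]
    have p1 := mul_le_mul h1 h3 (abs_nonneg _) (by positivity)
    have p2 := mul_le_mul h4 h2 (abs_nonneg _) (by positivity)
    linarith
  calc _ ≤ m * 1 * (m * (44 * R * B ^ 2 * (E / m) ^ 2)) := by gcongr
    _ = R * (44 * B ^ 2 * E ^ 2) := by field_simp
    _ ≤ R * (8 * Real.exp (22 * B)) := by
        refine mul_le_mul_of_nonneg_left ?_ hR.le
        set t := Real.exp B with ht
        have ht1 : B + 1 ≤ t := Real.add_one_le_exp B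
        have ht2 : 2 ≤ t := by linarith
        have hEt : E = t ^ 2 := by rw [hE, ht, ← Real.exp_nat_mul]; norm_num
        have h22 : Real.exp (22 * B) = t ^ 22 := by rw [ht, ← Real.exp_nat_mul]; norm_num
        rw [hEt, h22]
        have hBt : B ^ 2 ≤ t ^ 2 := by gcongr; linarith
        have h8 : (2 : ℝ) ^ 16 ≤ t ^ 16 := by gcongr
        calc 44 * B ^ 2 * (t ^ 2) ^ 2 ≤ (8 * 2 ^ 16) * t ^ 2 * (t ^ 2) ^ 2 := by
              gcongr; norm_num
          _ ≤ (8 * t ^ 16) * t ^ 2 * (t ^ 2) ^ 2 := by gcongr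
          _ = 8 * t ^ 22 := by ring
    _ = _ := by ring
end

section
/- Let d, m ≥ 1, B > 0, R > 0, and let x ∈ ℝ^d with ‖x‖₂ ≤ 1. Let w_1, …, w_m and v_1, …, v_m in ℝ^d satisfy |⟨w_r, x⟩| ≤ B and ‖v_r − w_r‖₂ ≤ R for every r ∈ [m]. Define α := Σ_{r=1}^m exp(⟨w_r, x⟩) and α̃ := Σ_{r=1}^m exp(⟨v_r, x⟩). Then |α^{-1} − α̃^{-1}| ≤ (R/m)·exp(3B + 2R). -/
/-!
By Cauchy–Schwarz the exponents `⟨w_r, x⟩` and `⟨v_r, x⟩` differ by at most `R`, so termwise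
comparison gives `α ≤ exp R * α̃` and `α̃ ≤ exp R * α`. Hence `α̃⁻¹` lies between `exp (-R) * α⁻¹`
and `exp R * α⁻¹`, which puts it within `R * exp R * α⁻¹` of `α⁻¹`. Since every term of `α` is at
least `exp (-B)`, also `α⁻¹ ≤ exp B / m`, and this yields the bound `(R / m) * exp (B + R)`,
stronger than required.
-/

/-- Cauchy–Schwarz: pairing with a vector of Euclidean norm at most `1` is `1`-Lipschitz. -/
lemma abs_pairing_sub_le {d : ℕ} {R : ℝ} {x a b : Fin d → ℝ}
    (hx : Real.sqrt (∑ k, (x k) ^ 2) ≤ 1) (hab : Real.sqrt (∑ k, (b k - a k) ^ 2) ≤ R) :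
    |∑ k, b k * x k - ∑ k, a k * x k| ≤ R := by
  have hsum : ∑ k, b k * x k - ∑ k, a k * x k = ∑ k, (b k - a k) * x k := by
    rw [← Finset.sum_sub_distrib]
    exact Finset.sum_congr rfl fun k _ => by ring
  rw [hsum]
  calc |∑ k, (b k - a k) * x k|
      ≤ Real.sqrt ((∑ k, (b k - a k) ^ 2) * ∑ k, (x k) ^ 2) :=
        Real.abs_le_sqrt (Finset.sum_mul_sq_le_sq_mul_sq _ _ _)
    _ = Real.sqrt (∑ k, (b k - a k) ^ 2) * Real.sqrt (∑ k, (x k) ^ 2) :=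
        Real.sqrt_mul (Finset.sum_nonneg fun k _ => sq_nonneg _) _
    _ ≤ Real.sqrt (∑ k, (b k - a k) ^ 2) := mul_le_of_le_one_right (Real.sqrt_nonneg _) hx
    _ ≤ R := hab

lemma sum_exp_le_exp_mul_sum_exp {ι : Type*} [Fintype ι] {R : ℝ} {s t : ι → ℝ}
    (h : ∀ r, s r ≤ R + t r) :
    ∑ r, Real.exp (s r) ≤ Real.exp R * ∑ r, Real.exp (t r) := by
  rw [Finset.mul_sum]
  refine Finset.sum_le_sum fun r _ => ?_
  rw [← Real.exp_add]
  exact Real.exp_le_exp.2 (h r)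

/-- Perturbation bound for the inverse softmax normalizer:
with `α = Σ_r exp⟨w_r,x⟩` and `α̃ = Σ_r exp⟨v_r,x⟩`, if `|⟨w_r,x⟩| ≤ B` and
`‖v_r − w_r‖₂ ≤ R` for all `r`, and `‖x‖₂ ≤ 1`, then
`|α⁻¹ − α̃⁻¹| ≤ (R/m)·exp(3B+2R)`. -/
theorem stmt_16 (d m : ℕ) (hd : 1 ≤ d) (hm : 1 ≤ m) (B R : ℝ) (hB : 0 < B) (hR : 0 < R)
    (x : Fin d → ℝ) (hx : Real.sqrt (∑ k, (x k) ^ 2) ≤ 1)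
    (w v : Fin m → Fin d → ℝ)
    (hw : ∀ r, |∑ k, w r k * x k| ≤ B)
    (hv : ∀ r, Real.sqrt (∑ k, (v r k - w r k) ^ 2) ≤ R) :
    |(∑ r, Real.exp (∑ k, w r k * x k))⁻¹ - (∑ r, Real.exp (∑ k, v r k * x k))⁻¹|
      ≤ (R / m) * Real.exp (3 * B + 2 * R) := by
  have hdist r := abs_le.1 (abs_pairing_sub_le hx (hv r))
  have hm0 : (0 : ℝ) < m := by exact_mod_cast hm
  have hne : (Finset.univ : Finset (Fin m)).Nonempty := ⟨⟨0, hm⟩, Finset.mem_univ _⟩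
  have hα : 0 < ∑ r, Real.exp (∑ k, w r k * x k) :=
    Finset.sum_pos (fun _ _ => Real.exp_pos _) hne
  have hα' : 0 < ∑ r, Real.exp (∑ k, v r k * x k) :=
    Finset.sum_pos (fun _ _ => Real.exp_pos _) hne
  have h1 : ∑ r, Real.exp (∑ k, w r k * x k) ≤
      Real.exp R * ∑ r, Real.exp (∑ k, v r k * x k) :=
    sum_exp_le_exp_mul_sum_exp fun r => by linarith [(hdist r).1]
  have h2 : ∑ r, Real.exp (∑ k, v r k * x k) ≤
      Real.exp R * ∑ r, Real.exp (∑ k, w r k * x k) :=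
    sum_exp_le_exp_mul_sum_exp fun r => by linarith [(hdist r).2]
  have hlow : m * Real.exp (-B) ≤ ∑ r, Real.exp (∑ k, w r k * x k) := by
    have := Finset.card_nsmul_le_sum Finset.univ (fun r => Real.exp (∑ k, w r k * x k))
      (Real.exp (-B)) fun r _ => Real.exp_le_exp.2 (abs_le.1 (hw r)).1
    simpa using this
  generalize ∑ r, Real.exp (∑ k, w r k * x k) = α at *
  generalize ∑ r, Real.exp (∑ k, v r k * x k) = β at *
  have hE := Real.exp_pos R
  have hp : 0 < α⁻¹ := inv_pos.2 hα
  have hupper : β⁻¹ ≤ Real.exp R * α⁻¹ := by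
    rw [← div_eq_mul_inv, inv_eq_one_div, div_le_div_iff₀ hα' hα]
    linarith
  have hlower : Real.exp (-R) * α⁻¹ ≤ β⁻¹ := by
    rw [Real.exp_neg, ← mul_inv]
    exact inv_anti₀ hα' h2
  have hp_le : α⁻¹ ≤ Real.exp B / m := by
    calc α⁻¹ ≤ (m * Real.exp (-B))⁻¹ := inv_anti₀ (by positivity) hlow
      _ = Real.exp B / m := by rw [Real.exp_neg]; field_simp
  have hexp : 1 - R ≤ Real.exp (-R) := by linarith [Real.add_one_le_exp (-R)]
  have hE1 : 1 ≤ Real.exp R := Real.one_le_exp hR.le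
  -- Multiply `1 - R ≤ exp (-R)` by `exp R`.
  have hexp' : Real.exp R - 1 ≤ R * Real.exp R := by
    have h := mul_le_mul_of_nonneg_right hexp hE.le
    rw [← Real.exp_add, neg_add_cancel, Real.exp_zero] at h
    linarith
  have hmain : |α⁻¹ - β⁻¹| ≤ R * Real.exp R * α⁻¹ := by
    rw [abs_le]
    constructor
    · linarith [mul_le_mul_of_nonneg_right hexp' hp.le]
    · have hRE : R ≤ R * Real.exp R := le_mul_of_one_le_right hR.le hE1
      linarith [mul_le_mul_of_nonneg_right hexp hp.le, mul_le_mul_of_nonneg_right hRE hp.le]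
  calc |α⁻¹ - β⁻¹| ≤ R * Real.exp R * α⁻¹ := hmain
    _ ≤ R * Real.exp R * (Real.exp B / m) := by gcongr
    _ = (R / m) * Real.exp (B + R) := by rw [Real.exp_add]; ring
    _ ≤ (R / m) * Real.exp (3 * B + 2 * R) := by
      gcongr <;> linarith
end

section
/- Let d, m ≥ 1, B ≥ 1, R > 0, and let x ∈ ℝ^d with ‖x‖₂ ≤ 1. Let w_1, …, w_m and v_1, …, v_m in ℝ^d satisfy |⟨w_r, x⟩| ≤ B and ‖v_r − w_r‖₂ ≤ R for every r ∈ [m]. Define the softmax vectors S, S̃ ∈ ℝ^m by S_r := exp(⟨w_r, x⟩)/Σ_{ρ=1}^m exp(⟨w_ρ, x⟩) and S̃_r := exp(⟨v_r, x⟩)/Σ_{ρ=1}^m exp(⟨v_ρ, x⟩). Then for every r ∈ [m], |S_r − S̃_r| ≤ (R/m)·exp(4B + 3R); moreover 0 < S_r ≤ exp(2B)/m for every r ∈ [m]. -/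
/-!
Write `a ρ = ⟨w ρ, x⟩` and `b ρ = ⟨v ρ, x⟩`. By Cauchy–Schwarz `|b ρ - a ρ| ≤ R`, so numerator and
denominator of the softmax each change by a factor in `[exp (-R), exp R]`, and the softmax entries
`S`, `S'` satisfy `S' ≤ exp (2R) S` and `S ≤ exp (2R) S'` (`softmax_le_exp_mul`). Hence
`|S - S'| ≤ S (exp (2R) - 1) ≤ S · 2R exp (2R)`. Together with `S ≤ exp (2B) / m`
(`softmax_le_exp_div`) this gives `|S - S'| ≤ (R / m) · 2 exp (2B + 2R)`, and the factor `2` is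
absorbed by `exp (2B)` because `B ≥ 1`.
-/

theorem sum_exp_pos {m : ℕ} (a : Fin m → ℝ) (r : Fin m) : 0 < ∑ ρ, Real.exp (a ρ) :=
  Finset.sum_pos (fun _ _ => Real.exp_pos _) ⟨r, Finset.mem_univ r⟩

/-- Every summand of the normalizing sum is at least `exp (-B)`, and the numerator is at most
`exp B`. -/
theorem softmax_le_exp_div {m : ℕ} (a : Fin m → ℝ) (B : ℝ) (h : ∀ ρ, |a ρ| ≤ B) (r : Fin m) :
    Real.exp (a r) / (∑ ρ, Real.exp (a ρ)) ≤ Real.exp (2 * B) / m := by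
  have hm : (0 : ℝ) < m := by exact_mod_cast r.pos
  have hsum : (m : ℝ) * Real.exp (-B) ≤ ∑ ρ, Real.exp (a ρ) := by
    have := Finset.card_nsmul_le_sum (Finset.univ : Finset (Fin m)) (fun ρ => Real.exp (a ρ))
      (Real.exp (-B)) (fun ρ _ => Real.exp_le_exp.2 (abs_le.1 (h ρ)).1)
    simpa using this
  rw [div_le_div_iff₀ (sum_exp_pos a r) hm]
  calc Real.exp (a r) * m ≤ Real.exp B * m := by
        gcongr
        exact (abs_le.1 (h r)).2
    _ = Real.exp (2 * B) * (m * Real.exp (-B)) := by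
        rw [show B = 2 * B + -B by ring, Real.exp_add]
        ring_nf
    _ ≤ _ := by gcongr

theorem softmax_le_exp_mul {m : ℕ} (a b : Fin m → ℝ) (R : ℝ) (h : ∀ ρ, |b ρ - a ρ| ≤ R)
    (r : Fin m) :
    Real.exp (b r) / (∑ ρ, Real.exp (b ρ))
      ≤ Real.exp (2 * R) * (Real.exp (a r) / (∑ ρ, Real.exp (a ρ))) := by
  have hsum : ∑ ρ, Real.exp (a ρ) ≤ Real.exp R * ∑ ρ, Real.exp (b ρ) := by
    rw [Finset.mul_sum]
    refine Finset.sum_le_sum fun ρ _ => ?_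
    rw [← Real.exp_add, Real.exp_le_exp]
    linarith [(abs_le.1 (h ρ)).1]
  have hnum : Real.exp (b r) ≤ Real.exp R * Real.exp (a r) := by
    rw [← Real.exp_add, Real.exp_le_exp]
    linarith [(abs_le.1 (h r)).2]
  rw [← mul_div_assoc, div_le_div_iff₀ (sum_exp_pos b r) (sum_exp_pos a r)]
  calc Real.exp (b r) * ∑ ρ, Real.exp (a ρ)
      ≤ (Real.exp R * Real.exp (a r)) * (Real.exp R * ∑ ρ, Real.exp (b ρ)) :=
        mul_le_mul hnum hsum (sum_exp_pos a r).le (by positivity)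
    _ = _ := by
        rw [two_mul, Real.exp_add]
        ring

/-- Entrywise perturbation bound for the softmax vector:
`|S_r − S̃_r| ≤ (R/m)·exp(4B+3R)` for all `r`, and moreover `0 < S_r ≤ exp(2B)/m`. -/
theorem stmt_17 (d m : ℕ) (hd : 1 ≤ d) (hm : 1 ≤ m) (B R : ℝ) (hB : 1 ≤ B) (hR : 0 < R)
    (x : Fin d → ℝ) (hx : Real.sqrt (∑ k, (x k) ^ 2) ≤ 1)
    (w v : Fin m → Fin d → ℝ)
    (hw : ∀ r, |∑ k, w r k * x k| ≤ B)
    (hv : ∀ r, Real.sqrt (∑ k, (v r k - w r k) ^ 2) ≤ R) :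
    (∀ r : Fin m,
      |Real.exp (∑ k, w r k * x k) / (∑ ρ, Real.exp (∑ k, w ρ k * x k))
        - Real.exp (∑ k, v r k * x k) / (∑ ρ, Real.exp (∑ k, v ρ k * x k))|
        ≤ (R / m) * Real.exp (4 * B + 3 * R)) ∧
    (∀ r : Fin m,
      0 < Real.exp (∑ k, w r k * x k) / (∑ ρ, Real.exp (∑ k, w ρ k * x k)) ∧
      Real.exp (∑ k, w r k * x k) / (∑ ρ, Real.exp (∑ k, w ρ k * x k))
        ≤ Real.exp (2 * B) / m) := by
  have hab : ∀ ρ, |∑ k, v ρ k * x k - ∑ k, w ρ k * x k| ≤ R := by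
    intro ρ
    rw [← Finset.sum_sub_distrib]
    simp only [← sub_mul]
    rw [abs_le]
    have h1 := Real.sum_mul_le_sqrt_mul_sqrt Finset.univ (fun k => v ρ k - w ρ k) x
    have h2 := Real.sum_mul_le_sqrt_mul_sqrt Finset.univ (fun k => -(v ρ k - w ρ k)) x
    simp only [neg_mul, Finset.sum_neg_distrib, neg_sq] at h2
    have h3 := mul_le_mul (hv ρ) hx (Real.sqrt_nonneg _) hR.le
    constructor <;> linarith
  have hpos : ∀ r : Fin m,
      0 < Real.exp (∑ k, w r k * x k) / (∑ ρ, Real.exp (∑ k, w ρ k * x k)) := fun r =>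
    div_pos (Real.exp_pos _) (sum_exp_pos (fun ρ => ∑ k, w ρ k * x k) r)
  have hle := softmax_le_exp_div (fun ρ => ∑ k, w ρ k * x k) B hw
  refine ⟨fun r => ?_, fun r => ⟨hpos r, hle r⟩⟩
  have h1 := softmax_le_exp_mul (fun ρ => ∑ k, w ρ k * x k) (fun ρ => ∑ k, v ρ k * x k) R hab r
  have h2 := softmax_le_exp_mul (fun ρ => ∑ k, v ρ k * x k) (fun ρ => ∑ k, w ρ k * x k) R
    (fun ρ => by rw [abs_sub_comm]; exact hab ρ) r
  have hS := hpos r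
  have hSle := hle r
  set S := Real.exp (∑ k, w r k * x k) / (∑ ρ, Real.exp (∑ k, w ρ k * x k))
  set S' := Real.exp (∑ k, v r k * x k) / (∑ ρ, Real.exp (∑ k, v ρ k * x k))
  set E := Real.exp (2 * R)
  have hE : 1 ≤ E := Real.one_le_exp (by linarith)
  have hE2 : E - 1 ≤ 2 * R * E := by
    -- this is `1 - 2R ≤ exp (-2R)` multiplied by `exp (2R)`
    have h := Real.add_one_le_exp (-(2 * R))
    have h' : Real.exp (-(2 * R)) * E = 1 := by rw [← Real.exp_add]; simp
    nlinarith
  have habs : |S - S'| ≤ S * (E - 1) := by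
    rw [abs_le]
    constructor
    · linarith
    -- when `S' ≤ S`, one has `S - S' ≤ S' (E - 1) ≤ S (E - 1)`
    · rcases le_total S S' with h | h
      · nlinarith
      · nlinarith
  have hm' : (0 : ℝ) < m := by exact_mod_cast hm
  have hB2 : 2 ≤ Real.exp (2 * B) := by linarith [Real.add_one_le_exp (2 * B)]
  have hexp : 2 * (Real.exp (2 * B) * E) ≤ Real.exp (4 * B + 3 * R) := by
    calc 2 * (Real.exp (2 * B) * E) ≤ Real.exp (2 * B) * (Real.exp (2 * B) * E) := by gcongr
      _ = Real.exp (4 * B + 2 * R) := by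
          rw [← Real.exp_add, ← Real.exp_add]
          ring_nf
      _ ≤ _ := Real.exp_le_exp.2 (by linarith)
  calc |S - S'| ≤ S * (E - 1) := habs
    _ ≤ (Real.exp (2 * B) / m) * (2 * R * E) :=
        mul_le_mul hSle hE2 (by linarith) (by positivity)
    _ = (R / m) * (2 * (Real.exp (2 * B) * E)) := by ring
    _ ≤ _ := by gcongr
end
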